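/- If β = −2N−2−α with −2−N < α < −N, then the diagonal recurrence coefficients of the Hahn polynomials satisfy A_i + C_i = −(α+1)/2 for every i = 0,…,N−1, while A_N + C_N = N(N+α+2)/2. -/

import Mathlib

/-- The Hahn recurrence coefficient
`A_i = (i+α+β+1)(i+α+1)(N-i)/((2i+α+β+1)(2i+α+β+2))` for `0 ≤ i < N`,
with the convention `A_N = 0`. -/
noncomputable def hahnA (N : ℕ) (α β : ℝ) (i : ℕ) : ℝ :=
  if i = N then 0
  else ((i : ℝ) + α + β + 1) * ((i : ℝ) + α + 1) * ((N : ℝ) - (i : ℝ)) /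
    ((2 * (i : ℝ) + α + β + 1) * (2 * (i : ℝ) + α + β + 2))

/-- The Hahn recurrence coefficient
`C_i = i(i+α+β+N+1)(i+β)/((2i+α+β)(2i+α+β+1))` for `1 ≤ i ≤ N`,
with the convention `C_0 = 0`. -/
noncomputable def hahnC (N : ℕ) (α β : ℝ) (i : ℕ) : ℝ :=
  if i = 0 then 0
  else (i : ℝ) * ((i : ℝ) + α + β + (N : ℝ) + 1) * ((i : ℝ) + β) /
    ((2 * (i : ℝ) + α + β) * (2 * (i : ℝ) + α + β + 1))

/-!
For generic parameters the diagonal coefficient is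
`A_i + C_i = (2N+β-α)/4 + (α²-β²)(2N+α+β+2)/(4(2i+α+β)(2i+α+β+2))`.
The condition `α + β = -2N-2` annihilates the second term, so the coefficient does not depend on `i`
until the denominator vanishes as well, which for `i ≤ N` happens only at `i = N`; there the sum
reduces to `C_N`.
-/

section

variable (N : ℕ) (α β : ℝ)

theorem hahnA_eq (i : ℕ) :
    hahnA N α β i = ((i : ℝ) + α + β + 1) * (i + α + 1) * (N - i) /
      ((2 * i + α + β + 1) * (2 * i + α + β + 2)) := by
  by_cases h : i = N <;> simp [hahnA, h]

theorem hahnC_eq (i : ℕ) :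
    hahnC N α β i = (i : ℝ) * (i + α + β + N + 1) * (i + β) /
      ((2 * i + α + β) * (2 * i + α + β + 1)) := by
  by_cases h : i = 0 <;> simp [hahnC, h]

theorem hahnA_self : hahnA N α β N = 0 :=
  if_pos rfl

variable {N α β}

theorem hahnC_self (h : 2 * (N : ℝ) + α + β + 1 ≠ 0) :
    hahnC N α β N = N * (N + β) / (2 * N + α + β) := by
  calc hahnC N α β N
      = N * (N + β) * (2 * N + α + β + 1) / ((2 * N + α + β) * (2 * N + α + β + 1)) := by
        rw [hahnC_eq]
        ring
    _ = N * (N + β) / (2 * N + α + β) := mul_div_mul_right _ _ h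

theorem hahnA_add_hahnC {i : ℕ} (h₀ : 2 * (i : ℝ) + α + β ≠ 0)
    (h₁ : 2 * (i : ℝ) + α + β + 1 ≠ 0) (h₂ : 2 * (i : ℝ) + α + β + 2 ≠ 0) :
    hahnA N α β i + hahnC N α β i =
      (2 * N + β - α) / 4 + (α ^ 2 - β ^ 2) * (2 * N + α + β + 2) /
        (4 * (2 * i + α + β) * (2 * i + α + β + 2)) := by
  rw [hahnA_eq, hahnC_eq, div_add_div _ _ (mul_ne_zero h₁ h₂) (mul_ne_zero h₀ h₁),
    div_add_div _ _ four_ne_zero (by positivity), div_eq_div_iff (by positivity) (by positivity)]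
  ring

end

theorem hahn_diagonal_beta_eq_reflected_general (N : ℕ) (α β : ℝ)
    (hβ : β = -2 * (N : ℝ) - 2 - α) :
    (∀ i : ℕ, i < N → hahnA N α β i + hahnC N α β i = -(α + 1) / 2) ∧
      hahnA N α β N + hahnC N α β N = (N : ℝ) * ((N : ℝ) + α + 2) / 2 := by
  constructor
  · intro i hi
    have h_lt : (i : ℝ) < N := Nat.cast_lt.mpr hi
    have h_zero : 2 * (N : ℝ) + α + β + 2 = 0 := by linarith
    rw [hahnA_add_hahnC (by linarith) (by linarith) (by linarith), h_zero, hβ]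
    ring
  · have h_denom : 2 * (N : ℝ) + α + β = -2 := by linarith
    rw [hahnA_self, hahnC_self (by norm_num [h_denom]), h_denom, hβ]
    ring

/-- if `β = -2N-2-α` with `-2-N < α < -N`, then `A_i + C_i = -(α+1)/2`
for every `i = 0,…,N-1`, while `A_N + C_N = N(N+α+2)/2`. -/
theorem hahn_diagonal_beta_eq_reflected (N : ℕ) (hN : 1 ≤ N) (α β : ℝ)
    (hα1 : -2 - (N : ℝ) < α) (hα2 : α < -(N : ℝ)) (hβ : β = -2 * (N : ℝ) - 2 - α) :
    (∀ i : ℕ, i < N → hahnA N α β i + hahnC N α β i = -(α + 1) / 2) ∧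
      hahnA N α β N + hahnC N α β N = (N : ℝ) * ((N : ℝ) + α + 2) / 2 :=
  hahn_diagonal_beta_eq_reflected_general N α β hβ
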